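/- arXiv:2510.15290 — 2 statements merged into one kernel-verified Lean document; each statement's English description precedes it below -/
import Mathlib

section
/- Let a and b be coprime positive integers and let ℓ be a positive integer with ℓ ∉ {1, 2} that is good with respect to a and b. Then ord_ℓ(a·b⁻¹) is even, the minimum of the set 𝒦_{(a,b)}(ℓ) = {k ∈ ℕ⁺ : ℓ ∣ a^k + b^k} equals ord_ℓ(a·b⁻¹)/2, and 𝒦_{(a,b)}(ℓ) = {α · ord_ℓ(a·b⁻¹)/2 : α an odd positive integer}; in particular 𝒦_{(a,b)}(ℓ) is infinite. -/
/-!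
Modulo `ℓ` the number `b` is a unit (a prime dividing both `ℓ` and `b` would divide `a`), so with
`x = a * b⁻¹` in `ZMod ℓ` the condition `ℓ ∣ a ^ k + b ^ k` reads `x ^ k = -1`. As `ℓ ∉ {1, 2}`,
`-1 ≠ 1` in `ZMod ℓ`. If `x ^ k = -1` and `d = orderOf x`, then `d ∣ 2 * k` but `d ∤ k`; hence `d` is
even and `k` is an odd multiple of `d / 2`. Reducing the exponent modulo `d` gives
`x ^ (d / 2) = -1`, and so all odd multiples of `d / 2` are solutions
(`orderOf_of_pow_eq_neg_one`).
-/

open scoped BigOperators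

/-- A positive integer `ℓ` is *good* with respect to integers `a`, `b` if
`ℓ ∣ a ^ k + b ^ k` for some positive integer `k`. -/
def IsGood (a b : ℤ) (ℓ : ℕ) : Prop :=
  ∃ k : ℕ, 0 < k ∧ (ℓ : ℤ) ∣ a ^ k + b ^ k

/-- The multiplicative order of `a * b⁻¹` modulo `n`. -/
noncomputable def ordAB (a b : ℤ) (n : ℕ) : ℕ :=
  orderOf ((a : ZMod n) * (b : ZMod n)⁻¹)

/-- The `ℓ`-part of `L` relative to `g`: the product of `p ^ ν_p(L)` over primes `p ∤ g`. -/
def ellPart (g L : ℕ) : ℕ :=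
  ∏ p ∈ L.primeFactors.filter fun p => ¬ p ∣ g, p ^ L.factorization p

/-- The threshold `γ(L) = max_{p ∣ g} ⌈ν_p(L) / ν_p(g)⌉` (with `γ(L) = 0` when `g = 1`). -/
def gammaL (g L : ℕ) : ℕ :=
  g.primeFactors.sup fun p => (L.factorization p + g.factorization p - 1) / g.factorization p

/-- If `-1` is a power of `x` and `-1 ≠ 1`, then the exponents of `x` giving `-1` are exactly the
odd multiples of half the order of `x`. -/
lemma orderOf_of_pow_eq_neg_one {R : Type*} [CommRing R] (hR : (-1 : R) ≠ 1) {x : R} {k : ℕ}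
    (hk : 0 < k) (hx : x ^ k = -1) :
    Even (orderOf x) ∧ 0 < orderOf x / 2 ∧
      ∀ j : ℕ, x ^ j = -1 ↔ ∃ α : ℕ, Odd α ∧ j = α * (orderOf x / 2) := by
  have hdvd : ∀ j : ℕ, x ^ j = -1 → orderOf x ∣ 2 * j ∧ ¬ orderOf x ∣ j := by
    intro j hj
    refine ⟨orderOf_dvd_of_pow_eq_one ?_, fun h => hR ?_⟩
    · rw [mul_comm, pow_mul, hj]; norm_num
    · rw [← hj, orderOf_dvd_iff_pow_eq_one.mp h]
  have heven : Even (orderOf x) := by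
    by_contra h
    rw [Nat.not_even_iff_odd] at h
    obtain ⟨h₁, h₂⟩ := hdvd k hx
    exact h₂ ((Nat.coprime_two_right.mpr h).dvd_of_dvd_mul_left h₁)
  obtain ⟨m, hm⟩ := heven.two_dvd
  have hdiv : orderOf x / 2 = m := by omega
  have hodd : ∀ j : ℕ, x ^ j = -1 → ∃ α : ℕ, Odd α ∧ j = α * m := by
    intro j hj
    obtain ⟨h₁, h₂⟩ := hdvd j hj
    rw [hm] at h₁ h₂
    obtain ⟨α, rfl⟩ := Nat.dvd_of_mul_dvd_mul_left two_pos h₁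
    refine ⟨α, ?_, mul_comm _ _⟩
    by_contra h
    rw [Nat.not_odd_iff_even] at h
    obtain ⟨β, rfl⟩ := h.two_dvd
    exact h₂ ⟨β, by ring⟩
  have hxm : x ^ m = -1 := by
    obtain ⟨α, ⟨β, rfl⟩, rfl⟩ := hodd k hx
    have h : (2 * β + 1) * m = orderOf x * β + m := by rw [hm]; ring
    rwa [h, pow_add, pow_mul, pow_orderOf_eq_one, one_pow, one_mul] at hx
  refine ⟨heven, ?_, fun j => ?_⟩
  · rw [hdiv]
    rcases Nat.eq_zero_or_pos m with h | h
    · rw [h, pow_zero] at hxm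
      exact absurd hxm.symm hR
    · exact h
  · rw [hdiv]
    refine ⟨hodd j, ?_⟩
    rintro ⟨α, hα, rfl⟩
    rw [mul_comm, pow_mul, hxm, hα.neg_one_pow]

lemma isUnit_natCast_of_dvd_pow_add_pow {a b ℓ k : ℕ} (hab : Nat.Coprime a b) (hk : 0 < k)
    (h : ℓ ∣ a ^ k + b ^ k) : IsUnit (b : ZMod ℓ) := by
  rw [ZMod.isUnit_iff_coprime]
  refine Nat.coprime_of_dvd fun p hp hpb hpl => ?_
  have hpa : p ∣ a ^ k :=
    (Nat.dvd_add_left (hpb.trans (dvd_pow_self b hk.ne'))).mp (hpl.trans h)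
  exact hp.one_lt.ne' (Nat.dvd_one.mp (hab ▸ Nat.dvd_gcd (hp.dvd_of_dvd_pow hpa) hpb))

lemma dvd_pow_add_pow_iff {a b ℓ : ℕ} (hb : IsUnit (b : ZMod ℓ)) (k : ℕ) :
    (ℓ : ℤ) ∣ (a : ℤ) ^ k + (b : ℤ) ^ k ↔
      (((a : ℤ) : ZMod ℓ) * ((b : ℤ) : ZMod ℓ)⁻¹) ^ k = -1 := by
  rw [← CharP.intCast_eq_zero_iff (ZMod ℓ) ℓ]
  push_cast
  have hbk : (b : ZMod ℓ) ^ k * ((b : ZMod ℓ)⁻¹) ^ k = 1 := by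
    rw [← mul_pow, ZMod.mul_inv_of_unit _ hb, one_pow]
  rw [mul_pow]
  constructor
  · intro h
    linear_combination ((b : ZMod ℓ)⁻¹) ^ k * h - hbk
  · intro h
    linear_combination (b : ZMod ℓ) ^ k * h - (a : ZMod ℓ) ^ k * hbk

theorem stmt8 (a b : ℕ) (ha : 0 < a) (hb : 0 < b) (hab : Nat.Coprime a b)
    (ℓ : ℕ) (hℓ : 0 < ℓ) (h1 : ℓ ≠ 1) (h2 : ℓ ≠ 2)
    (hgood : IsGood (a : ℤ) (b : ℤ) ℓ) :
    Even (ordAB (a : ℤ) (b : ℤ) ℓ) ∧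
    IsLeast {k : ℕ | 0 < k ∧ (ℓ : ℤ) ∣ (a : ℤ) ^ k + (b : ℤ) ^ k}
      (ordAB (a : ℤ) (b : ℤ) ℓ / 2) ∧
    {k : ℕ | 0 < k ∧ (ℓ : ℤ) ∣ (a : ℤ) ^ k + (b : ℤ) ^ k} =
      {k : ℕ | ∃ α : ℕ, Odd α ∧ 0 < α ∧ k = α * (ordAB (a : ℤ) (b : ℤ) ℓ / 2)} ∧
    {k : ℕ | 0 < k ∧ (ℓ : ℤ) ∣ (a : ℤ) ^ k + (b : ℤ) ^ k}.Infinite := by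
  obtain ⟨k, hk, hdvd⟩ := hgood
  have hu : IsUnit (b : ZMod ℓ) :=
    isUnit_natCast_of_dvd_pow_add_pow hab hk (by exact_mod_cast hdvd)
  have hneg : (-1 : ZMod ℓ) ≠ 1 := by
    have : Fact (2 < ℓ) := ⟨by omega⟩
    exact ZMod.neg_one_ne_one
  obtain ⟨heven, hpos, hiff⟩ :=
    orderOf_of_pow_eq_neg_one hneg hk ((dvd_pow_add_pow_iff hu k).mp hdvd)
  have hset : {k : ℕ | 0 < k ∧ (ℓ : ℤ) ∣ (a : ℤ) ^ k + (b : ℤ) ^ k} =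
      {k : ℕ | ∃ α : ℕ, Odd α ∧ 0 < α ∧ k = α * (ordAB (a : ℤ) (b : ℤ) ℓ / 2)} := by
    ext j
    simp only [Set.mem_setOf_eq, dvd_pow_add_pow_iff hu, hiff]
    constructor
    · rintro ⟨-, α, hα, hj⟩
      exact ⟨α, hα, hα.pos, hj⟩
    · rintro ⟨α, hα, hα0, hj⟩
      exact ⟨hj ▸ Nat.mul_pos hα0 hpos, α, hα, hj⟩
  refine ⟨heven, ?_, hset, ?_⟩
  · rw [hset]
    refine ⟨⟨1, odd_one, one_pos, (one_mul _).symm⟩, ?_⟩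
    rintro j ⟨α, -, hα, rfl⟩
    exact Nat.le_mul_of_pos_left _ hα
  · rw [hset]
    refine Set.infinite_of_forall_exists_gt fun n => ?_
    refine ⟨(2 * n + 1) * (ordAB (a : ℤ) (b : ℤ) ℓ / 2),
      ⟨2 * n + 1, odd_two_mul_add_one n, by omega, rfl⟩, ?_⟩
    exact lt_of_lt_of_le (by omega) (Nat.le_mul_of_pos_right _ hpos)
end

section
/- Let A and B be nonzero integers with g = gcd(A, B), write A = g·a and B = g·b with gcd(a, b) = 1, and let L be a positive integer, good with respect to A and B, whose ℓ-part ℓ = ∏_{p prime, p ∤ g} p^{ν_p(L)} satisfies ℓ ≥ 3. Then every K ∈ 𝒦_{(A,B)}(L) has the same parity as ord_ℓ(a·b⁻¹)/2, i.e., K ≡ ord_ℓ(a·b⁻¹)/2 (mod 2) for all K ∈ 𝒦_{(A,B)}(L). -/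
/-!
Write `ℓ` for the `ℓ`-part of `L`. It divides `L` and is coprime to `g`, so
`L ∣ A ^ K + B ^ K = g ^ K * (a ^ K + b ^ K)` forces `ℓ ∣ a ^ K + b ^ K`; coprimality of `a` and
`b` then makes `b` invertible modulo `ℓ`, and `x = a * b⁻¹` satisfies `x ^ K = -1` in `ZMod ℓ`.
Since `ℓ ≥ 3` gives `-1 ≠ 1`, the order of `x` divides `2 * K` but not `K`, so `K` is an odd
multiple of half that order (`modEq_orderOf_half`), hence of the same parity.
-/

open scoped BigOperators

/-- The `ℓ`-part divides `L`, because it is a subproduct of the prime factorization of `L`. -/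
theorem ellPart_dvd (g L : ℕ) (hL : 0 < L) : ellPart g L ∣ L := by
  conv_rhs => rw [← Nat.prod_factorization_pow_eq_self hL.ne']
  rw [Finsupp.prod, Nat.support_factorization]
  exact Finset.prod_dvd_prod_of_subset _ _ _ (Finset.filter_subset _ _)

theorem ellPart_coprime (g L : ℕ) : Nat.Coprime (ellPart g L) g := by
  refine Nat.Coprime.prod_left fun p hp => Nat.Coprime.pow_left _ ?_
  rw [Finset.mem_filter] at hp
  exact (Nat.Prime.coprime_iff_not_dvd (Nat.prime_of_mem_primeFactors hp.1)).2 hp.2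

/-- If `x ^ K = -1 ≠ 1`, the order `d` of `x` divides `2 * K` but not `K`, so `d = 2 * m` where
`K` is an odd multiple of `m`. -/
theorem modEq_orderOf_half {R : Type*} [CommRing R] (hR : (-1 : R) ≠ 1) (x : R) (K : ℕ)
    (hx : x ^ K = -1) : K ≡ orderOf x / 2 [MOD 2] := by
  have h1 : orderOf x ∣ 2 * K := orderOf_dvd_of_pow_eq_one (by rw [mul_comm, pow_mul, hx]; ring)
  have h2 : ¬ orderOf x ∣ K := fun h => hR (by rw [← hx, orderOf_dvd_iff_pow_eq_one.1 h])
  obtain ⟨c, hc⟩ := h1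
  rcases Nat.even_or_odd' c with ⟨t, rfl | rfl⟩
  · exact absurd ⟨t, by linarith⟩ h2
  · have hd : 2 ∣ orderOf x := by
      have : 2 ∣ orderOf x * (2 * t + 1) := ⟨K, hc.symm⟩
      exact Nat.Coprime.dvd_of_dvd_mul_right (by simp) this
    obtain ⟨m, hm⟩ := hd
    rw [hm] at hc ⊢
    have hK : K = m + 2 * (m * t) := by linarith
    rw [Nat.mul_div_cancel_left _ (by norm_num), hK]
    simp [Nat.ModEq]

theorem stmt15 (A B : ℤ) (hA : A ≠ 0) (hB : B ≠ 0) (a b : ℤ)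
    (hAa : A = (Int.gcd A B : ℤ) * a) (hBb : B = (Int.gcd A B : ℤ) * b)
    (hab : IsCoprime a b) (L : ℕ) (hL : 0 < L) (hgood : IsGood A B L)
    (hℓ : 3 ≤ ellPart (Int.gcd A B) L) :
    ∀ K ∈ {K : ℕ | 0 < K ∧ (L : ℤ) ∣ A ^ K + B ^ K},
      K ≡ ordAB a b (ellPart (Int.gcd A B) L) / 2 [MOD 2] := by
  rintro K ⟨hK, hdvd⟩
  set g := Int.gcd A B with hg
  set ℓ := ellPart g L with hℓdef
  have hℓab : (ℓ : ℤ) ∣ a ^ K + b ^ K := by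
    have h1 : (ℓ : ℤ) ∣ (g : ℤ) ^ K * (a ^ K + b ^ K) := by
      refine (Int.natCast_dvd_natCast.2 (ellPart_dvd g L hL)).trans (hdvd.trans ?_)
      rw [hAa, hBb, mul_pow, mul_pow, mul_add]
    have h2 : IsCoprime (ℓ : ℤ) ((g : ℤ) ^ K) :=
      (Nat.isCoprime_iff_coprime.2 (ellPart_coprime g L)).pow_right
    exact h2.dvd_of_dvd_mul_left h1
  -- A common factor of `b` and `ℓ` would divide `a ^ K`, which is coprime to `b`.
  have hbℓ : IsCoprime b (ℓ : ℤ) := by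
    have h : IsCoprime b (a ^ K + b ^ K) := by
      obtain ⟨n, rfl⟩ := Nat.exists_eq_succ_of_ne_zero hK.ne'
      have h := (IsCoprime.add_mul_left_right_iff (x := b) (y := a ^ (n + 1)) (z := b ^ n)).2
        hab.symm.pow_right
      rwa [← pow_succ'] at h
    exact h.of_isCoprime_of_dvd_right hℓab
  have : Fact (2 < ℓ) := ⟨hℓ⟩
  have hb : (b : ZMod ℓ) * (b : ZMod ℓ)⁻¹ = 1 := by
    obtain ⟨u, v, huv⟩ := hbℓ
    have h := congrArg (Int.cast : ℤ → ZMod ℓ) huv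
    push_cast at h
    rw [ZMod.natCast_self, mul_zero, add_zero] at h
    exact ZMod.mul_inv_of_unit _ (IsUnit.of_mul_eq_one_right _ h)
  have hsum : (a : ZMod ℓ) ^ K + (b : ZMod ℓ) ^ K = 0 := by
    have h := (ZMod.intCast_zmod_eq_zero_iff_dvd _ ℓ).2 hℓab
    push_cast at h
    exact h
  refine modEq_orderOf_half ZMod.neg_one_ne_one _ K ?_
  rw [mul_pow, eq_neg_of_add_eq_zero_left hsum, neg_mul, ← mul_pow, hb, one_pow]
end
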